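/- Main theorem: for each r ∈ (0,∞) there exists a unique κ_r ∈ (0,∞) such that lim_{k→∞} (1/k) log Σ_{σ∈Ω_k} (μ_h(J_σ) ‖φ'_σ‖^r)^{κ_r/(r+κ_r)} = 0; setting q_r = κ_r/(r+κ_r), one has β(q_r) = r·q_r and κ_r = β(q_r)/(1 − q_r); the quantization dimension of order r of μ_h exists and equals κ_r, i.e., lim_{n→∞} r·log n / (− log V_{n,r}(μ_h)) = κ_r; moreover the κ_r-dimensional lower quantization coefficient of order r of μ_h is positive: liminf_{n→∞} n · V_{n,r}(μ_h)^{κ_r/r} > 0. -/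

import Mathlib

open MeasureTheory Filter Metric

noncomputable section

/-- A cookie-cutter system on `J = [0,1]`. -/
structure CookieCutter where
  N : ℕ
  hN : 2 ≤ N
  Jsub : Fin N → Set ℝ
  f : ℝ → ℝ
  φ : Fin N → ℝ → ℝ
  c : ℝ
  γ : ℝ
  b : ℝ
  B : ℝ
  hJsub_sub : ∀ j, Jsub j ⊆ Set.Icc 0 1
  hJsub_interval : ∀ j, ∃ u v : ℝ, u ≤ v ∧ Jsub j = Set.Icc u v
  hJsub_disj : ∀ i j, i ≠ j → Disjoint (Jsub i) (Jsub j)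
  hbij : ∀ j, Set.BijOn f (Jsub j) (Set.Icc 0 1)
  hφ_maps : ∀ j, ∀ x ∈ Set.Icc (0:ℝ) 1, φ j x ∈ Jsub j
  hφ_rinv : ∀ j, ∀ x ∈ Set.Icc (0:ℝ) 1, f (φ j x) = x
  hφ_linv : ∀ j, ∀ x ∈ Jsub j, φ j (f x) = x
  hfdiff : ∀ j, ∀ x ∈ Jsub j, DifferentiableAt ℝ f x
  hφdiff : ∀ j, ∀ x ∈ Set.Icc (0:ℝ) 1, DifferentiableAt ℝ (φ j) x
  hc : 0 < c
  hγ : γ ∈ Set.Ioc (0:ℝ) 1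
  hHolder : ∀ j, ∀ x ∈ Jsub j, ∀ y ∈ Jsub j, |deriv f x - deriv f y| ≤ c * |x - y| ^ γ
  hb : IsGLB ((fun x => |deriv f x|) '' ⋃ j, Jsub j) b
  hB : IsLUB ((fun x => |deriv f x|) '' ⋃ j, Jsub j) B
  hb1 : 1 < b

namespace CookieCutter

variable (cc : CookieCutter)

/-- `φ_σ = φ_{σ_1} ∘ ⋯ ∘ φ_{σ_n}` for a word `σ`. -/
def wordMap : List (Fin cc.N) → ℝ → ℝ
  | [] => id
  | j :: rest => cc.φ j ∘ wordMap rest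

/-- The basic interval `J_σ = φ_σ(J)`. -/
def Jc (σ : List (Fin cc.N)) : Set ℝ := cc.wordMap σ '' Set.Icc 0 1

/-- The diameter `|J_σ|`. -/
def diamJ (σ : List (Fin cc.N)) : ℝ := Metric.diam (cc.Jc σ)

/-- `‖φ'_σ‖ = sup_{x ∈ J} |φ'_σ(x)|`. -/
def φnorm (σ : List (Fin cc.N)) : ℝ :=
  sSup ((fun x => |deriv (cc.wordMap σ) x|) '' Set.Icc 0 1)

/-- The distortion constant `ξ = exp (c / (b^γ − 1))`. -/
def xi : ℝ := Real.exp (cc.c / (cc.b ^ cc.γ - 1))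

/-- The cookie-cutter set `E = ⋂_{n ≥ 1} ⋃_{σ ∈ Ω_n} J_σ`. -/
def E : Set ℝ := ⋂ (n : ℕ) (_ : 1 ≤ n), ⋃ σ : Fin n → Fin cc.N, cc.Jc (List.ofFn σ)

/-- `η = ξ^{9h}`. -/
def eta (h : ℝ) : ℝ := cc.xi ^ ((9:ℝ) * h)

/-- `L = η³ ξ^{3h}`. -/
def Lconst (h : ℝ) : ℝ := (cc.eta h) ^ 3 * cc.xi ^ ((3:ℝ) * h)

/-- A Gibbs-like measure for the cookie-cutter system: a Borel probability measure
supported on `E` with `η⁻¹|J_σ|^h ≤ μ(J_σ) ≤ η|J_σ|^h` for every word `σ`. -/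
def IsGibbsLike (μ : Measure ℝ) (h : ℝ) : Prop :=
  IsProbabilityMeasure μ ∧ μ (cc.Eᶜ) = 0 ∧
    ∀ σ : List (Fin cc.N), σ ≠ [] →
      (cc.eta h)⁻¹ * cc.diamJ σ ^ h ≤ (μ (cc.Jc σ)).toReal ∧
      (μ (cc.Jc σ)).toReal ≤ cc.eta h * cc.diamJ σ ^ h

/-- A finite maximal antichain in `Ω`. -/
def IsFMA (Γ : Finset (List (Fin cc.N))) : Prop :=
  (∀ σ ∈ Γ, σ ≠ []) ∧
  (∀ ω : ℕ → Fin cc.N, ∃ k : ℕ, 1 ≤ k ∧ (List.ofFn fun i : Fin k => ω i) ∈ Γ) ∧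
  ∀ σ ∈ Γ, ∀ τ ∈ Γ, σ <+: τ → σ = τ

end CookieCutter

/-- The `n`-th quantization error of order `r`. -/
def Vnr (μ : Measure ℝ) (n : ℕ) (r : ℝ) : ℝ :=
  sInf ((fun α : Finset ℝ => ∫ x, Metric.infDist x (α : Set ℝ) ^ r ∂μ) ''
    {α : Finset ℝ | α.Nonempty ∧ α.card ≤ n})

/-- The auxiliary quantization error `u_{n,r}` with `U = (0,1)`. -/
def unr (μ : Measure ℝ) (n : ℕ) (r : ℝ) : ℝ :=
  sInf ((fun α : Finset ℝ =>
      ∫ x, Metric.infDist x ((α : Set ℝ) ∪ (Set.Ioo (0:ℝ) 1)ᶜ) ^ r ∂μ) ''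
    {α : Finset ℝ | α.card ≤ n})

/-!
Bounded distortion gives `|J_σ| ≍ ‖φ'_σ‖`, and the gaps between the `J_j` keep distinct basic
intervals of one generation apart on the scale of their diameters. Hence a ball of radius `ρ`
centred in `E` contains one basic interval of size comparable to `ρ`, and its trace on `E` lies in
another one, so a Gibbs-like measure is Ahlfors `h`-regular on `E`. Then `n` balls of radius a small
multiple of `n^(-1/h)` miss half of the mass, whereas `n` balls of radius a large multiple of
`n^(-1/h)` can be chosen to cover `E`, and `V_{n,r} ≍ n^(-r/h)`.

Since `μ(J_σ) ≍ ‖φ'_σ‖^h`, the pressure of `μ(J_σ)^q ‖φ'_σ‖^t` is `Q(hq + t)`. As `Q` is strictly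
decreasing with zero `h`, the equation defining `κ_r` becomes `(h + r) κ_r / (r + κ_r) = h`, that is
`κ_r = h`, and `β(q) = h (1 - q)`.
-/

open Asymptotics Topology

/-! ### Logarithms of comparable functions -/

lemma exists_pos_eventually_le_mul_of_isBigO {α : Type*} {l : Filter α} {f g : α → ℝ}
    (hg : ∀ x, 0 ≤ g x) (hfg : f =O[l] g) : ∃ C > 0, ∀ᶠ x in l, f x ≤ C * g x := by
  obtain ⟨C, hC, hbound⟩ := hfg.exists_pos
  refine ⟨C, hC, hbound.bound.mono fun x hx => (Real.le_norm_self _).trans ?_⟩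
  rwa [Real.norm_of_nonneg (hg x)] at hx

lemma abs_log_sub_log_le_log {a b C : ℝ} (hC : 1 ≤ C) (hab : |a| ≤ C * |b|) (hba : |b| ≤ C * |a|) :
    |Real.log a - Real.log b| ≤ Real.log C := by
  have hC0 : C ≠ 0 := by positivity
  rcases eq_or_ne a 0 with rfl | ha
  · obtain rfl : b = 0 := by simpa using hba
    simpa using Real.log_nonneg hC
  have hb : b ≠ 0 := by
    rintro rfl
    exact ha (by simpa using hab)
  have log_le : ∀ {x y : ℝ}, x ≠ 0 → y ≠ 0 → |x| ≤ C * |y| →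
      Real.log x - Real.log y ≤ Real.log C := by
    intro x y hx hy hxy
    have := Real.log_le_log (abs_pos.2 hx) hxy
    rw [Real.log_mul hC0 (abs_ne_zero.2 hy), Real.log_abs, Real.log_abs] at this
    linarith
  exact abs_sub_le_iff.2 ⟨log_le ha hb hab, log_le hb ha hba⟩

lemma isBigO_one_log_sub_log_of_isTheta {α : Type*} {l : Filter α} {f g : α → ℝ}
    (hfg : f =Θ[l] g) : (fun x => Real.log (f x) - Real.log (g x)) =O[l] fun _ => (1 : ℝ) := by
  obtain ⟨C, hC⟩ := hfg.1.bound
  obtain ⟨D, hD⟩ := hfg.2.bound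
  set M := max 1 (max C D) with hM
  refine .of_bound (Real.log M) ?_
  filter_upwards [hC, hD] with x hCx hDx
  rw [norm_one, mul_one]
  refine abs_log_sub_log_le_log (le_max_left 1 _) (hCx.trans ?_) (hDx.trans ?_) <;>
    exact mul_le_mul_of_nonneg_right (by simp [hM]) (norm_nonneg _)

lemma tendsto_mul_log_div_neg_log_of_isTheta {V : ℕ → ℝ} {s : ℝ} (hs : s ≠ 0) (r : ℝ)
    (hV : V =Θ[atTop] fun n : ℕ => (n : ℝ) ^ (-s)) :
    Tendsto (fun n : ℕ => r * Real.log n / (-Real.log (V n))) atTop (𝓝 (r / s)) := by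
  have hlog : Tendsto (fun n : ℕ => Real.log n) atTop atTop :=
    Real.tendsto_log_atTop.comp tendsto_natCast_atTop_atTop
  have hlogV : (fun n : ℕ => -Real.log (V n)) ~[atTop] fun n : ℕ => s * Real.log n := by
    have hbounded : (fun n : ℕ => -Real.log (V n) - s * Real.log n) =O[atTop]
        fun _ => (1 : ℝ) := by
      refine (isBigO_one_log_sub_log_of_isTheta hV).neg_left.congr' ?_ .rfl
      filter_upwards [eventually_gt_atTop 0] with n hn
      rw [Real.log_rpow (Nat.cast_pos.2 hn)]
      ring
    exact hbounded.trans_isLittleO ((isLittleO_const_left.2 (Or.inr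
      (tendsto_norm_atTop_atTop.comp hlog))).const_mul_right hs)
  have hquot := (IsEquivalent.refl (u := fun n : ℕ => r * Real.log n) (l := atTop)).div hlogV
  refine (hquot.symm.tendsto_nhds ?_ :)
  refine tendsto_const_nhds.congr' ?_
  filter_upwards [hlog.eventually_ne_atTop 0] with n hn
  simp only [Pi.div_apply]
  field_simp

/-! ### Pressure of a weight on words -/

section Pressure

variable {ι : Type*} [Fintype ι] {w v : List ι → ℝ} {p q : ℝ}

/-- The `n`-th partition function of a weight on the words over a finite alphabet. -/
def partitionFunction (w : List ι → ℝ) (n : ℕ) : ℝ := ∑ σ : Fin n → ι, w (List.ofFn σ)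

/-- The topological pressure of a weight `w` on words exists and equals `p`: the partition
functions of `w` have exponential growth rate `p`. -/
def HasPressure (w : List ι → ℝ) (p : ℝ) : Prop :=
  Tendsto (fun n : ℕ => 1 / (n : ℝ) * Real.log (partitionFunction w n)) atTop (𝓝 p)

lemma partitionFunction_nonneg (hw : ∀ σ, 0 ≤ w σ) (n : ℕ) : 0 ≤ partitionFunction w n :=
  Finset.sum_nonneg fun _ _ => hw _

lemma partitionFunction_pos [Nonempty ι] (hw : ∀ σ, 0 < w σ) (n : ℕ) :
    0 < partitionFunction w n :=
  Finset.sum_pos (fun _ _ => hw _) Finset.univ_nonempty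

lemma partitionFunction_isBigO (hw : ∀ σ, 0 ≤ w σ) (hv : ∀ σ, 0 ≤ v σ) (hwv : w =O[⊤] v) :
    partitionFunction w =O[⊤] partitionFunction v := by
  obtain ⟨C, -, hC⟩ := exists_pos_eventually_le_mul_of_isBigO hv hwv
  refine isBigO_top.2 ⟨C, fun n => ?_⟩
  rw [Real.norm_of_nonneg (partitionFunction_nonneg hw n),
    Real.norm_of_nonneg (partitionFunction_nonneg hv n), partitionFunction, partitionFunction,
    Finset.mul_sum]
  exact Finset.sum_le_sum fun σ _ => eventually_top.1 hC _

lemma hasPressure_congr_of_isTheta (hw : ∀ σ, 0 ≤ w σ) (hv : ∀ σ, 0 ≤ v σ) (hwv : w =Θ[⊤] v) :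
    HasPressure w p ↔ HasPressure v p := by
  have hpart : partitionFunction w =Θ[atTop] partitionFunction v :=
    IsTheta.mono ⟨partitionFunction_isBigO hw hv hwv.1, partitionFunction_isBigO hv hw hwv.2⟩ le_top
  have hdiff : Tendsto (fun n : ℕ => 1 / (n : ℝ) * Real.log (partitionFunction w n) -
      1 / (n : ℝ) * Real.log (partitionFunction v n)) atTop (𝓝 0) := by
    simp only [← mul_sub]
    exact ((isBigO_refl (fun n : ℕ => 1 / (n : ℝ)) atTop).mul
      (isBigO_one_log_sub_log_of_isTheta hpart)).trans_tendsto
      (by simpa using tendsto_one_div_atTop_nhds_zero_nat (𝕜 := ℝ))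
  exact tendsto_iff_of_dist (by simpa only [Real.dist_eq, abs_zero] using hdiff.abs)

lemma HasPressure.le_add_log [Nonempty ι] {θ : ℝ} (hθ : 0 < θ) (hv : ∀ σ, 0 < v σ)
    (hvw : ∀ σ, v σ ≤ θ ^ σ.length * w σ) (hp : HasPressure w p) (hq : HasPressure v q) :
    q ≤ p + Real.log θ := by
  have hw : ∀ σ, 0 < w σ := fun σ =>
    pos_of_mul_pos_right ((hv σ).trans_le (hvw σ)) (pow_nonneg hθ.le _)
  refine le_of_tendsto_of_tendsto hq (hp.add_const _) ?_
  filter_upwards [eventually_gt_atTop 0] with n hn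
  have hpart : partitionFunction v n ≤ θ ^ n * partitionFunction w n := by
    rw [partitionFunction, partitionFunction, Finset.mul_sum]
    exact Finset.sum_le_sum fun σ _ => by simpa using hvw (List.ofFn σ)
  have hlog := Real.log_le_log (partitionFunction_pos hv n) hpart
  rw [Real.log_mul (pow_pos hθ n).ne' (partitionFunction_pos hw n).ne', Real.log_pow] at hlog
  calc 1 / (n : ℝ) * Real.log (partitionFunction v n)
      ≤ 1 / (n : ℝ) * (n * Real.log θ + Real.log (partitionFunction w n)) := by gcongr
    _ = 1 / (n : ℝ) * Real.log (partitionFunction w n) + Real.log θ := by field_simp; ring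

end Pressure

/-! ### Quantization of measures with power-law ball masses -/

section Quantization

open scoped NNReal ENNReal

section PseudoMetricSpace

variable {X : Type*} [PseudoMetricSpace X] [MeasurableSpace X] {μ : Measure X} {s : Set X}
  {h m r : ℝ}

/-- The upper half of Ahlfors `h`-regularity (Frostman's condition): small balls have mass at most
a constant times the `h`-th power of the radius. -/
def IsFrostman (μ : Measure X) (h : ℝ) : Prop :=
  ∃ C > 0, ∀ᶠ ρ in 𝓝[>] (0 : ℝ), ∀ x, μ.real (closedBall x ρ) ≤ C * ρ ^ h

/-- The lower half of Ahlfors `h`-regularity on `s`: small balls centred in `s` have mass at least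
a constant times the `h`-th power of the radius. -/
def IsLowerRegularOn (μ : Measure X) (s : Set X) (h : ℝ) : Prop :=
  ∃ C > 0, ∀ᶠ ρ in 𝓝[>] (0 : ℝ), ∀ x ∈ s, C * ρ ^ h ≤ μ.real (closedBall x ρ)

lemma rpow_mul_one_sub_card_mul_le_integral_infDist_rpow [IsProbabilityMeasure μ] {α : Finset X}
    (hα : α.Nonempty) {ρ : ℝ} (hρ : 0 ≤ ρ) (hr : 0 ≤ r)
    (hball : ∀ a ∈ α, μ.real (closedBall a ρ) ≤ m)
    (hint : Integrable (fun x => infDist x (α : Set X) ^ r) μ) :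
    ρ ^ r * (1 - α.card * m) ≤ ∫ x, infDist x (α : Set X) ^ r ∂μ := by
  set far := {x | ρ ^ r ≤ infDist x (α : Set X) ^ r}
  have hcover : (Set.univ : Set X) ⊆ far ∪ ⋃ a ∈ α, closedBall a ρ := by
    intro x _
    rcases le_or_gt ρ (infDist x (α : Set X)) with hx | hx
    · exact Or.inl (Real.rpow_le_rpow hρ hx hr)
    · obtain ⟨a, ha, hxa⟩ := (infDist_lt_iff (Finset.coe_nonempty.2 hα)).1 hx
      exact Or.inr (Set.mem_biUnion ha hxa.le)
  have hmass : 1 ≤ μ.real far + α.card * m := calc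
    1 = μ.real Set.univ := probReal_univ.symm
    _ ≤ μ.real far + μ.real (⋃ a ∈ α, closedBall a ρ) :=
      (measureReal_mono hcover).trans (measureReal_union_le _ _)
    _ ≤ μ.real far + ∑ a ∈ α, μ.real (closedBall a ρ) := by
      gcongr
      exact measureReal_biUnion_finset_le _ _
    _ ≤ μ.real far + α.card * m := by
      gcongr
      simpa only [nsmul_eq_mul] using Finset.sum_le_card_nsmul α _ m hball
  calc ρ ^ r * (1 - α.card * m) ≤ ρ ^ r * μ.real far := by
        gcongr
        linarith
    _ ≤ ∫ x, infDist x (α : Set X) ^ r ∂μ :=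
      mul_meas_ge_le_integral_of_nonneg (.of_forall fun _ => Real.rpow_nonneg infDist_nonneg _)
        hint _

variable [OpensMeasurableSpace X] [IsProbabilityMeasure μ] {ρ : ℝ≥0}

lemma card_mul_le_one_of_isSeparated {α : Finset X}
    (hα : IsSeparated (2 * ρ : ℝ≥0) (α : Set X))
    (hball : ∀ a ∈ α, m ≤ μ.real (closedBall a ρ)) : α.card * m ≤ 1 := by
  have hdisj : (α : Set X).PairwiseDisjoint fun a => closedBall a (ρ : ℝ) := by
    intro a ha b hb hab
    refine closedBall_disjoint_closedBall ?_
    have hlt : ((2 * ρ : ℝ≥0) : ℝ≥0∞) < edist a b := hα ha hb hab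
    rw [edist_nndist, ENNReal.coe_lt_coe] at hlt
    rw [← two_mul]
    exact_mod_cast hlt
  calc α.card * m ≤ ∑ a ∈ α, μ.real (closedBall a ρ) := by
        simpa only [nsmul_eq_mul] using Finset.card_nsmul_le_sum α _ m hball
    _ = μ.real (⋃ a ∈ α, closedBall a ρ) :=
      (measureReal_biUnion_finset hdisj fun _ _ => isClosed_closedBall.measurableSet).symm
    _ ≤ 1 := measureReal_le_one

lemma packingNumber_ne_top_of_le_measureReal_closedBall (hm : 0 < m)
    (hball : ∀ x ∈ s, m ≤ μ.real (closedBall x ρ)) : packingNumber (2 * ρ) s ≠ ⊤ := by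
  obtain ⟨k, hk⟩ := exists_nat_gt m⁻¹
  intro htop
  have hlt : (k : ℕ∞) < packingNumber (2 * ρ) s := htop ▸ ENat.natCast_lt_top k
  simp only [packingNumber, lt_iSup_iff] at hlt
  obtain ⟨C, hCs, hCsep, hkC⟩ := hlt
  obtain ⟨D, hDC, hD⟩ := Set.exists_subset_encard_eq hkC.le
  obtain ⟨α, rfl⟩ := (Set.finite_of_encard_eq_coe hD).exists_finset_coe
  have hcard : α.card = k := by simpa [Set.encard_coe_eq_coe_finsetCard] using hD
  have := card_mul_le_one_of_isSeparated (hCsep.subset hDC) fun a ha => hball a (hCs (hDC ha))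
  rw [hcard] at this
  exact absurd this (not_le.2 ((inv_lt_iff_one_lt_mul₀ hm).1 hk))

lemma exists_finset_card_mul_le_one_and_subset_iUnion_closedBall (hm : 0 < m)
    (hball : ∀ x ∈ s, m ≤ μ.real (closedBall x ρ)) :
    ∃ α : Finset X, α.card * m ≤ 1 ∧ s ⊆ ⋃ a ∈ α, closedBall a (2 * ρ) := by
  have htop := packingNumber_ne_top_of_le_measureReal_closedBall hm hball
  have hfin : (maximalSeparatedSet (2 * ρ) s).Finite := by
    rwa [← Set.encard_ne_top_iff, encard_maximalSeparatedSet htop]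
  refine ⟨hfin.toFinset, card_mul_le_one_of_isSeparated (μ := μ) (ρ := ρ) ?_ fun a ha => ?_, ?_⟩
  · rw [hfin.coe_toFinset]
    exact isSeparated_maximalSeparatedSet
  · exact hball a (maximalSeparatedSet_subset (hfin.mem_toFinset.1 ha))
  · simpa using isCover_iff_subset_iUnion_closedBall.1 (isCover_maximalSeparatedSet htop)

end PseudoMetricSpace

lemma integrable_infDist_rpow_of_memLp {X : Type*} [NormedAddCommGroup X] [MeasurableSpace X]
    [OpensMeasurableSpace X] {μ : Measure X} [IsFiniteMeasure μ] {r : ℝ} (hr : 0 ≤ r)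
    (hμ : MemLp id (ENNReal.ofReal r) μ) {t : Set X} (ht : t.Nonempty) :
    Integrable (fun x => infDist x t ^ r) μ := by
  obtain ⟨a, ha⟩ := ht
  have hmem : MemLp (fun x => infDist x t) (ENNReal.ofReal r) μ := by
    refine (hμ.sub (memLp_const a)).norm.mono' measurable_infDist.aestronglyMeasurable ?_
    refine .of_forall fun x => ?_
    rw [Real.norm_of_nonneg infDist_nonneg]
    exact (infDist_le_dist_of_mem ha).trans_eq (dist_eq_norm x a)
  simpa only [Real.norm_of_nonneg infDist_nonneg, ENNReal.toReal_ofReal hr] using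
    hmem.integrable_norm_rpow'

variable {μ : Measure ℝ} {n : ℕ} {h r : ℝ}

lemma Vnr_nonneg : 0 ≤ Vnr μ n r :=
  Real.sInf_nonneg <| by
    rintro _ ⟨α, -, rfl⟩
    exact integral_nonneg fun _ => Real.rpow_nonneg infDist_nonneg _

lemma Vnr_le_integral {α : Finset ℝ} (hα : α.Nonempty) (hn : α.card ≤ n) :
    Vnr μ n r ≤ ∫ x, infDist x (α : Set ℝ) ^ r ∂μ := by
  refine csInf_le ⟨0, ?_⟩ ⟨α, ⟨hα, hn⟩, rfl⟩
  rintro _ ⟨α, -, rfl⟩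
  exact integral_nonneg fun _ => Real.rpow_nonneg infDist_nonneg _

lemma le_Vnr {V : ℝ} (hn : n ≠ 0)
    (hV : ∀ α : Finset ℝ, α.Nonempty → α.card ≤ n → V ≤ ∫ x, infDist x (α : Set ℝ) ^ r ∂μ) :
    V ≤ Vnr μ n r := by
  refine le_csInf ⟨_, {0}, ⟨Finset.singleton_nonempty 0, ?_⟩, rfl⟩ ?_
  · simpa using Nat.one_le_iff_ne_zero.2 hn
  · rintro _ ⟨α, ⟨hα, hcard⟩, rfl⟩
    exact hV α hα hcard

lemma tendsto_inv_const_mul_rpow_nhdsGT_zero {M : ℝ} (hM : 0 < M) (hh : 0 < h) :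
    Tendsto (fun n : ℕ => (M * n)⁻¹ ^ h⁻¹) atTop (𝓝[>] 0) := by
  refine tendsto_nhdsWithin_iff.2 ⟨?_, ?_⟩
  · have htop := tendsto_natCast_atTop_atTop (R := ℝ) |>.const_mul_atTop hM
    simpa [Real.zero_rpow (inv_ne_zero hh.ne')] using
      htop.inv_tendsto_atTop.rpow_const (p := h⁻¹) (Or.inr (inv_nonneg.2 hh.le))
  · filter_upwards [eventually_gt_atTop 0] with n hn
    have : (0 : ℝ) < n := Nat.cast_pos.2 hn
    exact Real.rpow_pos_of_pos (by positivity) _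

lemma inv_mul_rpow_inv_rpow {M x : ℝ} (hM : 0 ≤ M) (hx : 0 ≤ x) :
    ((M * x)⁻¹ ^ h⁻¹) ^ r = M⁻¹ ^ (r / h) * x ^ (-(r / h)) := by
  rw [← Real.rpow_mul (by positivity), mul_inv, Real.mul_rpow (by positivity) (by positivity),
    Real.rpow_neg hx, Real.inv_rpow hx, inv_mul_eq_div]

lemma IsFrostman.isBigO_Vnr [IsProbabilityMeasure μ] (hh : 0 < h) (hr : 0 ≤ r)
    (hreg : IsFrostman μ h) (hμ : MemLp id (ENNReal.ofReal r) μ) :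
    (fun n : ℕ => (n : ℝ) ^ (-(r / h))) =O[atTop] fun n => Vnr μ n r := by
  obtain ⟨C, hC, hball⟩ := hreg
  have hC2 : 0 < 2 * C := by positivity
  have hc : 0 < (2 * C)⁻¹ ^ (r / h) := by positivity
  refine .of_bound (2 / (2 * C)⁻¹ ^ (r / h)) ?_
  filter_upwards [eventually_gt_atTop 0,
    (tendsto_inv_const_mul_rpow_nhdsGT_zero hC2 hh).eventually hball] with n hn hball
  have hn0 : (0 : ℝ) < n := Nat.cast_pos.2 hn
  set ρ := (2 * C * n)⁻¹ ^ h⁻¹ with hρ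
  have hρh : C * ρ ^ h = 1 / (2 * n) := by
    rw [hρ, Real.rpow_inv_rpow (by positivity) hh.ne']
    field_simp
  have hV : ρ ^ r / 2 ≤ Vnr μ n r := le_Vnr hn.ne' fun α hα hcard => by
    refine le_trans ?_ (rpow_mul_one_sub_card_mul_le_integral_infDist_rpow hα
      (Real.rpow_nonneg (by positivity) _) hr (fun a _ => hρh ▸ hball a)
      (integrable_infDist_rpow_of_memLp hr hμ (Finset.coe_nonempty.2 hα)))
    have hcard' : α.card * (1 / (2 * n : ℝ)) ≤ 1 / 2 := by
      rw [mul_one_div, div_le_div_iff₀ (by positivity) two_pos]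
      linarith [show (α.card : ℝ) ≤ n from Nat.cast_le.2 hcard]
    rw [div_eq_mul_one_div]
    gcongr
    linarith
  rw [hρ, inv_mul_rpow_inv_rpow hC2.le hn0.le] at hV
  rw [Real.norm_of_nonneg (by positivity), Real.norm_of_nonneg Vnr_nonneg, div_mul_eq_mul_div,
    le_div_iff₀ hc]
  linarith

lemma IsLowerRegularOn.Vnr_isBigO [IsProbabilityMeasure μ] {s : Set ℝ} (hh : 0 < h) (hr : 0 ≤ r)
    (hreg : IsLowerRegularOn μ s h) (hs : μ sᶜ = 0) :
    (fun n => Vnr μ n r) =O[atTop] fun n : ℕ => (n : ℝ) ^ (-(r / h)) := by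
  obtain ⟨C, hC, hball⟩ := hreg
  refine .of_bound (2 ^ r * C⁻¹ ^ (r / h)) ?_
  filter_upwards [eventually_gt_atTop 0,
    (tendsto_inv_const_mul_rpow_nhdsGT_zero hC hh).eventually hball] with n hn hball
  have hn0 : (0 : ℝ) < n := Nat.cast_pos.2 hn
  set ρ := (C * n)⁻¹ ^ h⁻¹ with hρ
  have hρ0 : 0 ≤ ρ := by positivity
  have hρh : C * ρ ^ h = (n : ℝ)⁻¹ := by
    rw [hρ, Real.rpow_inv_rpow (by positivity) hh.ne']
    field_simp
  obtain ⟨α, hcard, hcover⟩ := exists_finset_card_mul_le_one_and_subset_iUnion_closedBall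
    (ρ := ⟨ρ, hρ0⟩) (inv_pos.2 hn0) fun x hx => hρh ▸ hball x hx
  have hdist : ∀ᵐ x ∂μ, ∃ a ∈ α, dist x a ≤ 2 * ρ := by
    filter_upwards [mem_ae_iff.2 hs] with x hx
    obtain ⟨a, ha, hxa⟩ := Set.mem_iUnion₂.1 (hcover hx)
    exact ⟨a, ha, hxa⟩
  have hα : α.Nonempty := let ⟨_, a, ha, _⟩ := hdist.exists; ⟨a, ha⟩
  have hV : Vnr μ n r ≤ (2 * ρ) ^ r := calc
    Vnr μ n r ≤ ∫ x, infDist x (α : Set ℝ) ^ r ∂μ := Vnr_le_integral hα <| by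
      rwa [← div_eq_mul_inv, div_le_one hn0, Nat.cast_le] at hcard
    _ ≤ ∫ _, (2 * ρ) ^ r ∂μ := by
      refine integral_mono_of_nonneg (.of_forall fun _ => Real.rpow_nonneg infDist_nonneg _)
        (integrable_const _) (hdist.mono fun x ⟨a, ha, hxa⟩ => ?_)
      exact Real.rpow_le_rpow infDist_nonneg ((infDist_le_dist_of_mem ha).trans hxa) hr
    _ = (2 * ρ) ^ r := by simp
  rw [Real.norm_of_nonneg Vnr_nonneg, Real.norm_of_nonneg (by positivity), mul_assoc,
    ← inv_mul_rpow_inv_rpow hC.le hn0.le, ← Real.mul_rpow two_pos.le hρ0]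
  exact hV

lemma exists_pos_eventually_le_mul_rpow_of_isBigO {V : ℕ → ℝ} {s : ℝ} (hs : 0 < s)
    (hV0 : ∀ n, 0 ≤ V n) (hV : (fun n : ℕ => (n : ℝ) ^ (-s)) =O[atTop] V) :
    ∃ C : ℝ, 0 < C ∧ ∀ᶠ n : ℕ in atTop, C ≤ n * V n ^ s⁻¹ := by
  have hinv : (fun n : ℕ => (n : ℝ)⁻¹) =O[atTop] fun n => V n ^ s⁻¹ :=
    (hV.rpow (inv_nonneg.2 hs.le) (.of_forall hV0)).congr_left fun n => by
      rw [← Real.rpow_mul n.cast_nonneg, neg_mul, mul_inv_cancel₀ hs.ne', Real.rpow_neg_one]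
  obtain ⟨C, hC, hle⟩ :=
    exists_pos_eventually_le_mul_of_isBigO (fun n => Real.rpow_nonneg (hV0 n) _) hinv
  refine ⟨C⁻¹, inv_pos.2 hC, ?_⟩
  filter_upwards [hle, eventually_gt_atTop 0] with n hn hn0
  rw [inv_le_iff_one_le_mul₀ hC]
  rw [inv_le_iff_one_le_mul₀ (Nat.cast_pos.2 hn0)] at hn
  linarith

end Quantization

/-! ### Geometry of cookie-cutter sets -/

lemma abs_log_sub_log_le_abs_sub {a b : ℝ} (ha : 1 ≤ a) (hb : 1 ≤ b) :
    |Real.log a - Real.log b| ≤ |a - b| := by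
  wlog hab : b ≤ a generalizing a b
  · rw [abs_sub_comm, abs_sub_comm a]
    exact this hb ha (le_of_not_ge hab)
  have hb0 : 0 < b := one_pos.trans_le hb
  have hlog : Real.log b ≤ Real.log a := Real.log_le_log hb0 hab
  rw [abs_of_nonneg (sub_nonneg.2 hlog), abs_of_nonneg (sub_nonneg.2 hab)]
  calc Real.log a - Real.log b = Real.log (a / b) :=
        (Real.log_div (one_pos.trans_le ha).ne' hb0.ne').symm
    _ ≤ a / b - 1 := Real.log_le_sub_one_of_pos (div_pos (one_pos.trans_le ha) hb0)
    _ = (a - b) / b := by rw [sub_div, div_self hb0.ne']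
    _ ≤ a - b := div_le_self (sub_nonneg.2 hab) hb

lemma exists_pos_forall_le_dist_of_pairwise_disjoint {X ι : Type*} [MetricSpace X] [Finite ι]
    {s : ι → Set X} (hs : ∀ i, IsCompact (s i)) (hdisj : ∀ i j, i ≠ j → Disjoint (s i) (s j)) :
    ∃ δ > 0, ∀ i j, i ≠ j → ∀ x ∈ s i, ∀ y ∈ s j, δ ≤ dist x y := by
  have hpair : ∀ i j, i ≠ j → ∀ᶠ δ in 𝓝[>] (0 : ℝ), ∀ x ∈ s i, ∀ y ∈ s j, δ ≤ dist x y := by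
    intro i j hij
    obtain ⟨δ, hδ, hthick⟩ := (hdisj i j hij).exists_thickenings (hs i) (hs j).isClosed
    filter_upwards [Ioc_mem_nhdsGT hδ] with δ' hδ' x hx y hy
    refine hδ'.2.trans (not_lt.1 fun hlt => Set.disjoint_left.1 hthick ?_
      (self_subset_thickening hδ _ hy))
    exact mem_thickening_iff.2 ⟨x, hx, by rwa [dist_comm]⟩
  have hall : ∀ᶠ δ in 𝓝[>] (0 : ℝ), ∀ i j, i ≠ j → ∀ x ∈ s i, ∀ y ∈ s j, δ ≤ dist x y := by
    simpa only [eventually_all, eventually_imp_distrib_left] using hpair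
  obtain ⟨δ, hδ, hpos⟩ := (hall.and self_mem_nhdsWithin).exists
  exact ⟨δ, hpos, hδ⟩

lemma exists_eq_append_cons_of_length_eq_of_ne {α : Type*} : ∀ {σ τ : List α},
    σ.length = τ.length → σ ≠ τ → ∃ ω i j u v, i ≠ j ∧ σ = ω ++ i :: u ∧ τ = ω ++ j :: v
  | [], [], _, h => absurd rfl h
  | i :: σ, j :: τ, hl, h => by
    by_cases hij : i = j
    · subst hij
      obtain ⟨ω, a, b, u, v, hab, rfl, rfl⟩ := exists_eq_append_cons_of_length_eq_of_ne
        (Nat.succ_injective hl) (mt (congrArg (i :: ·)) h)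
      exact ⟨i :: ω, a, b, u, v, hab, rfl, rfl⟩
    · exact ⟨[], i, j, σ, τ, hij, rfl, rfl⟩

namespace CookieCutter

variable (cc : CookieCutter) {σ τ : List (Fin cc.N)} {j : Fin cc.N} {x y : ℝ}

instance : NeZero cc.N := ⟨(two_pos.trans_le cc.hN).ne'⟩

lemma b_pos : 0 < cc.b := one_pos.trans cc.hb1

lemma inv_b_pow_le_one (n : ℕ) : cc.b⁻¹ ^ n ≤ 1 :=
  pow_le_one₀ (inv_nonneg.2 cc.b_pos.le) (inv_le_one_of_one_le₀ cc.hb1.le)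

lemma one_lt_b_rpow_γ : 1 < cc.b ^ cc.γ := Real.one_lt_rpow cc.hb1 cc.hγ.1

lemma xi_pos : 0 < cc.xi := Real.exp_pos _

lemma one_le_xi : 1 ≤ cc.xi :=
  Real.one_le_exp (div_nonneg cc.hc.le (sub_nonneg.2 cc.one_lt_b_rpow_γ.le))

lemma φ_mem_Icc (hx : x ∈ Set.Icc 0 1) : cc.φ j x ∈ Set.Icc (0 : ℝ) 1 :=
  cc.hJsub_sub j (cc.hφ_maps j x hx)

lemma b_le_abs_deriv_f (hx : x ∈ cc.Jsub j) : cc.b ≤ |deriv cc.f x| :=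
  cc.hb.1 ⟨x, Set.mem_iUnion.2 ⟨j, hx⟩, rfl⟩

lemma abs_deriv_f_le_B (hx : x ∈ cc.Jsub j) : |deriv cc.f x| ≤ cc.B :=
  cc.hB.1 ⟨x, Set.mem_iUnion.2 ⟨j, hx⟩, rfl⟩

lemma abs_deriv_f_pos (hx : x ∈ cc.Jsub j) : 0 < |deriv cc.f x| :=
  cc.b_pos.trans_le (cc.b_le_abs_deriv_f hx)

lemma one_lt_B : 1 < cc.B := by
  have hx := cc.hφ_maps 0 0 (by simp)
  exact cc.hb1.trans_le ((cc.b_le_abs_deriv_f hx).trans (cc.abs_deriv_f_le_B hx))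

lemma abs_deriv_φ (hx : x ∈ Set.Icc (0 : ℝ) 1) :
    |deriv (cc.φ j) x| = |deriv cc.f (cc.φ j x)|⁻¹ := by
  have hcomp : HasDerivAt (cc.f ∘ cc.φ j) (deriv cc.f (cc.φ j x) * deriv (cc.φ j) x) x :=
    (cc.hfdiff j _ (cc.hφ_maps j x hx)).hasDerivAt.comp x (cc.hφdiff j x hx).hasDerivAt
  have hid : HasDerivWithinAt (cc.f ∘ cc.φ j) 1 (Set.Icc 0 1) x :=
    (hasDerivWithinAt_id x _).congr (fun y hy => cc.hφ_rinv j y hy) (cc.hφ_rinv j x hx)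
  have hmul := (uniqueDiffOn_Icc zero_lt_one x hx).eq_deriv _ hcomp.hasDerivWithinAt hid
  rw [← abs_inv, eq_inv_of_mul_eq_one_right hmul]

lemma inv_B_le_abs_deriv_φ (hx : x ∈ Set.Icc (0 : ℝ) 1) : cc.B⁻¹ ≤ |deriv (cc.φ j) x| := by
  rw [cc.abs_deriv_φ hx]
  exact inv_anti₀ (cc.abs_deriv_f_pos (cc.hφ_maps j x hx))
    (cc.abs_deriv_f_le_B (cc.hφ_maps j x hx))

section WordMap

lemma wordMap_append : cc.wordMap (σ ++ τ) = cc.wordMap σ ∘ cc.wordMap τ := by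
  induction σ with
  | nil => rfl
  | cons j σ ih => rw [List.cons_append, wordMap, ih, wordMap, Function.comp_assoc]

lemma wordMap_mem_Icc (hx : x ∈ Set.Icc 0 1) : cc.wordMap σ x ∈ Set.Icc (0 : ℝ) 1 := by
  induction σ with
  | nil => exact hx
  | cons j σ ih => exact cc.φ_mem_Icc ih

lemma differentiableAt_wordMap (hx : x ∈ Set.Icc 0 1) : DifferentiableAt ℝ (cc.wordMap σ) x := by
  induction σ with
  | nil => exact differentiableAt_id
  | cons j σ ih => exact (cc.hφdiff j _ (cc.wordMap_mem_Icc hx)).comp x ih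

lemma abs_deriv_wordMap_append (hx : x ∈ Set.Icc 0 1) :
    |deriv (cc.wordMap (σ ++ τ)) x| =
      |deriv (cc.wordMap σ) (cc.wordMap τ x)| * |deriv (cc.wordMap τ) x| := by
  rw [wordMap_append, ← abs_mul, deriv_comp x
    (cc.differentiableAt_wordMap (cc.wordMap_mem_Icc hx)) (cc.differentiableAt_wordMap hx)]

lemma abs_deriv_wordMap_cons (hx : x ∈ Set.Icc 0 1) :
    |deriv (cc.wordMap (j :: σ)) x| =
      |deriv cc.f (cc.wordMap (j :: σ) x)|⁻¹ * |deriv (cc.wordMap σ) x| := by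
  rw [← List.singleton_append, cc.abs_deriv_wordMap_append hx]
  exact congrArg (· * _) (cc.abs_deriv_φ (cc.wordMap_mem_Icc hx))

lemma wordMap_cons_mem_Jsub (hx : x ∈ Set.Icc 0 1) : cc.wordMap (j :: σ) x ∈ cc.Jsub j :=
  cc.hφ_maps j _ (cc.wordMap_mem_Icc hx)

lemma abs_deriv_wordMap_pos (hx : x ∈ Set.Icc 0 1) : 0 < |deriv (cc.wordMap σ) x| := by
  induction σ with
  | nil => simp [wordMap]
  | cons j σ ih =>
    rw [cc.abs_deriv_wordMap_cons hx]
    exact mul_pos (inv_pos.2 (cc.abs_deriv_f_pos (cc.wordMap_cons_mem_Jsub hx))) ih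

lemma abs_deriv_wordMap_le (hx : x ∈ Set.Icc 0 1) :
    |deriv (cc.wordMap σ) x| ≤ cc.b⁻¹ ^ σ.length := by
  induction σ with
  | nil => simp [wordMap]
  | cons j σ ih =>
    rw [cc.abs_deriv_wordMap_cons hx, List.length_cons, pow_succ']
    exact mul_le_mul (inv_anti₀ cc.b_pos (cc.b_le_abs_deriv_f (cc.wordMap_cons_mem_Jsub hx))) ih
      (abs_nonneg _) (inv_nonneg.2 cc.b_pos.le)

lemma abs_deriv_wordMap_le_φnorm (hx : x ∈ Set.Icc 0 1) :
    |deriv (cc.wordMap σ) x| ≤ cc.φnorm σ := by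
  refine le_csSup ⟨cc.b⁻¹ ^ σ.length, ?_⟩ ⟨x, hx, rfl⟩
  rintro _ ⟨y, hy, rfl⟩
  exact cc.abs_deriv_wordMap_le hy

lemma φnorm_le {M : ℝ} (hM : ∀ x ∈ Set.Icc (0 : ℝ) 1, |deriv (cc.wordMap σ) x| ≤ M) :
    cc.φnorm σ ≤ M := by
  refine csSup_le ((Set.nonempty_Icc.2 zero_le_one).image _) ?_
  rintro _ ⟨x, hx, rfl⟩
  exact hM x hx

lemma φnorm_pos : 0 < cc.φnorm σ :=
  (cc.abs_deriv_wordMap_pos (x := 0) (by simp)).trans_le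
    (cc.abs_deriv_wordMap_le_φnorm (by simp))

lemma φnorm_le_inv_b_pow : cc.φnorm σ ≤ cc.b⁻¹ ^ σ.length :=
  cc.φnorm_le fun _ hx => cc.abs_deriv_wordMap_le hx

lemma φnorm_nil : cc.φnorm [] = 1 := by
  refine le_antisymm (by simpa using cc.φnorm_le_inv_b_pow (σ := [])) ?_
  simpa [wordMap] using cc.abs_deriv_wordMap_le_φnorm (σ := []) (x := 0) (by simp)

lemma φnorm_append_le : cc.φnorm (σ ++ τ) ≤ cc.φnorm σ :=
  cc.φnorm_le fun x hx => by
    rw [cc.abs_deriv_wordMap_append hx]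
    exact (mul_le_of_le_one_right (abs_nonneg _)
      ((cc.abs_deriv_wordMap_le hx).trans (cc.inv_b_pow_le_one _))).trans
      (cc.abs_deriv_wordMap_le_φnorm (cc.wordMap_mem_Icc hx))

lemma abs_wordMap_sub_le (hx : x ∈ Set.Icc 0 1) (hy : y ∈ Set.Icc 0 1) :
    |cc.wordMap σ x - cc.wordMap σ y| ≤ cc.φnorm σ := by
  have hxy : |x - y| ≤ 1 := Real.dist_le_of_mem_Icc_01 hx hy
  exact ((convex_Icc (0 : ℝ) 1).norm_image_sub_le_of_norm_deriv_le
    (fun _ hz => cc.differentiableAt_wordMap hz)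
    (fun _ hz => cc.abs_deriv_wordMap_le_φnorm hz) hy hx).trans
    (mul_le_of_le_one_right cc.φnorm_pos.le hxy)

end WordMap

section Distortion

lemma dist_log_abs_deriv_f_le (hx : x ∈ cc.Jsub j) (hy : y ∈ cc.Jsub j) :
    dist (Real.log |deriv cc.f x|) (Real.log |deriv cc.f y|) ≤ cc.c * |x - y| ^ cc.γ :=
  (abs_log_sub_log_le_abs_sub (cc.hb1.le.trans (cc.b_le_abs_deriv_f hx))
    (cc.hb1.le.trans (cc.b_le_abs_deriv_f hy))).trans
    ((abs_abs_sub_abs_le_abs_sub _ _).trans (cc.hHolder j x hx y hy))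

lemma abs_wordMap_sub_rpow_γ_le (hx : x ∈ Set.Icc 0 1) (hy : y ∈ Set.Icc 0 1) :
    |cc.wordMap σ x - cc.wordMap σ y| ^ cc.γ ≤ (cc.b ^ cc.γ)⁻¹ ^ σ.length := by
  have hb := inv_nonneg.2 cc.b_pos.le
  calc |cc.wordMap σ x - cc.wordMap σ y| ^ cc.γ ≤ (cc.b⁻¹ ^ σ.length) ^ cc.γ :=
        Real.rpow_le_rpow (abs_nonneg _)
          ((cc.abs_wordMap_sub_le hx hy).trans cc.φnorm_le_inv_b_pow) cc.hγ.1.le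
    _ = (cc.b ^ cc.γ)⁻¹ ^ σ.length := by
      rw [← Real.rpow_pow_comm hb, Real.inv_rpow cc.b_pos.le]

lemma dist_log_abs_deriv_wordMap_le (hx : x ∈ Set.Icc 0 1) (hy : y ∈ Set.Icc 0 1) :
    dist (Real.log |deriv (cc.wordMap σ) x|) (Real.log |deriv (cc.wordMap σ) y|) ≤
      cc.c * ∑ i ∈ Finset.Ico 1 (σ.length + 1), (cc.b ^ cc.γ)⁻¹ ^ i := by
  induction σ with
  | nil => simp [wordMap]
  | cons j σ ih =>
    have log_cons : ∀ z ∈ Set.Icc (0 : ℝ) 1, Real.log |deriv (cc.wordMap (j :: σ)) z| =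
        Real.log |deriv (cc.wordMap σ) z| -
          Real.log |deriv cc.f (cc.wordMap (j :: σ) z)| := fun z hz => by
      rw [cc.abs_deriv_wordMap_cons hz, Real.log_mul
        (inv_pos.2 (cc.abs_deriv_f_pos (cc.wordMap_cons_mem_Jsub hz))).ne'
        (cc.abs_deriv_wordMap_pos hz).ne', Real.log_inv]
      ring
    have hf := (cc.dist_log_abs_deriv_f_le
      (cc.wordMap_cons_mem_Jsub (j := j) (σ := σ) hx) (cc.wordMap_cons_mem_Jsub hy)).trans
      (mul_le_mul_of_nonneg_left (cc.abs_wordMap_sub_rpow_γ_le hx hy) cc.hc.le)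
    rw [log_cons x hx, log_cons y hy, Finset.sum_Ico_succ_top (by simp), mul_add]
    exact (dist_sub_sub_le _ _ _ _).trans (add_le_add ih hf)

lemma φnorm_le_xi_mul_abs_deriv (hx : x ∈ Set.Icc 0 1) :
    cc.φnorm σ ≤ cc.xi * |deriv (cc.wordMap σ) x| := by
  refine cc.φnorm_le fun y hy => ?_
  have hb := cc.one_lt_b_rpow_γ
  have hlog : Real.log |deriv (cc.wordMap σ) y| - Real.log |deriv (cc.wordMap σ) x| ≤
      cc.c / (cc.b ^ cc.γ - 1) := calc
    _ ≤ cc.c * ∑ i ∈ Finset.Ico 1 (σ.length + 1), (cc.b ^ cc.γ)⁻¹ ^ i :=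
      (le_abs_self _).trans (cc.dist_log_abs_deriv_wordMap_le hy hx)
    _ ≤ cc.c * ((cc.b ^ cc.γ)⁻¹ ^ 1 / (1 - (cc.b ^ cc.γ)⁻¹)) := by
      have := cc.hc.le
      gcongr
      exact geom_sum_Ico_le_of_lt_one (by positivity) (inv_lt_one_of_one_lt₀ hb)
    _ = cc.c / (cc.b ^ cc.γ - 1) := by field_simp
  rw [← Real.exp_log (cc.abs_deriv_wordMap_pos (σ := σ) hx),
    ← Real.exp_log (cc.abs_deriv_wordMap_pos (σ := σ) hy), xi, ← Real.exp_add]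
  exact Real.exp_le_exp.2 (sub_le_iff_le_add.1 hlog)

lemma φnorm_mul_abs_sub_le (hx : x ∈ Set.Icc 0 1) (hy : y ∈ Set.Icc 0 1) :
    cc.φnorm σ * |x - y| ≤ cc.xi * |cc.wordMap σ x - cc.wordMap σ y| := by
  wlog hxy : y < x generalizing x y
  · rcases (not_lt.1 hxy).eq_or_lt with rfl | hlt
    · simp
    · rw [abs_sub_comm, abs_sub_comm (cc.wordMap σ x)]
      exact this hy hx hlt
  have hsub : Set.Icc y x ⊆ Set.Icc (0 : ℝ) 1 := Set.Icc_subset_Icc hy.1 hx.2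
  obtain ⟨z, hz, hslope⟩ := exists_deriv_eq_slope (cc.wordMap σ) hxy
    (fun w hw => (cc.differentiableAt_wordMap (hsub hw)).continuousAt.continuousWithinAt)
    (fun w hw => (cc.differentiableAt_wordMap
      (hsub (Set.Ioo_subset_Icc_self hw))).differentiableWithinAt)
  have hdist := cc.φnorm_le_xi_mul_abs_deriv (σ := σ) (hsub (Set.Ioo_subset_Icc_self hz))
  have hpos : 0 < |x - y| := abs_pos.2 (sub_ne_zero.2 hxy.ne')
  rwa [hslope, abs_div, ← mul_div_assoc, le_div_iff₀ hpos] at hdist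

lemma one_le_xi_mul_B : 1 ≤ cc.xi * cc.B :=
  one_le_mul_of_one_le_of_one_le cc.one_le_xi cc.one_lt_B.le

lemma φnorm_le_mul_φnorm_concat : cc.φnorm σ ≤ cc.xi * cc.B * cc.φnorm (σ ++ [j]) := by
  have h0 : (0 : ℝ) ∈ Set.Icc (0 : ℝ) 1 := by simp
  have hB := one_pos.trans cc.one_lt_B
  have hxi := cc.xi_pos
  calc cc.φnorm σ ≤ cc.xi * |deriv (cc.wordMap σ) (cc.φ j 0)| :=
        cc.φnorm_le_xi_mul_abs_deriv (cc.φ_mem_Icc h0)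
    _ = cc.xi * cc.B * (|deriv (cc.wordMap σ) (cc.φ j 0)| * cc.B⁻¹) := by field_simp
    _ ≤ cc.xi * cc.B * (|deriv (cc.wordMap σ) (cc.φ j 0)| * |deriv (cc.φ j) 0|) := by
      gcongr
      exact cc.inv_B_le_abs_deriv_φ h0
    _ = cc.xi * cc.B * |deriv (cc.wordMap (σ ++ [j])) 0| := by
      rw [cc.abs_deriv_wordMap_append h0]
      rfl
    _ ≤ cc.xi * cc.B * cc.φnorm (σ ++ [j]) := by
      gcongr
      exact cc.abs_deriv_wordMap_le_φnorm h0

end Distortion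

section BasicIntervals

lemma isCompact_Jc : IsCompact (cc.Jc σ) :=
  isCompact_Icc.image_of_continuousOn fun _ hx =>
    (cc.differentiableAt_wordMap hx).continuousAt.continuousWithinAt

lemma Jc_subset_Icc : cc.Jc σ ⊆ Set.Icc 0 1 :=
  Set.image_subset_iff.2 fun _ hx => cc.wordMap_mem_Icc hx

lemma Jc_append_subset : cc.Jc (σ ++ τ) ⊆ cc.Jc σ := by
  rintro _ ⟨x, hx, rfl⟩
  exact ⟨cc.wordMap τ x, cc.wordMap_mem_Icc hx, by rw [wordMap_append]; rfl⟩

lemma diamJ_nonneg : 0 ≤ cc.diamJ σ := Metric.diam_nonneg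

lemma dist_le_diamJ (hx : x ∈ cc.Jc σ) (hy : y ∈ cc.Jc σ) : dist x y ≤ cc.diamJ σ :=
  dist_le_diam_of_mem cc.isCompact_Jc.isBounded hx hy

lemma diamJ_le_φnorm : cc.diamJ σ ≤ cc.φnorm σ := by
  refine diam_le_of_forall_dist_le cc.φnorm_pos.le ?_
  rintro _ ⟨x, hx, rfl⟩ _ ⟨y, hy, rfl⟩
  exact cc.abs_wordMap_sub_le hx hy

lemma φnorm_le_xi_mul_diamJ : cc.φnorm σ ≤ cc.xi * cc.diamJ σ := by
  have h0 : (0 : ℝ) ∈ Set.Icc (0 : ℝ) 1 := by simp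
  have h1 : (1 : ℝ) ∈ Set.Icc (0 : ℝ) 1 := by simp
  calc cc.φnorm σ = cc.φnorm σ * |(1 : ℝ) - 0| := by simp
    _ ≤ cc.xi * |cc.wordMap σ 1 - cc.wordMap σ 0| := cc.φnorm_mul_abs_sub_le h1 h0
    _ ≤ cc.xi * cc.diamJ σ :=
      mul_le_mul_of_nonneg_left (cc.dist_le_diamJ ⟨1, h1, rfl⟩ ⟨0, h0, rfl⟩) cc.xi_pos.le

lemma diamJ_isTheta_φnorm : cc.diamJ =Θ[⊤] cc.φnorm := by
  refine ⟨isBigO_top.2 ⟨1, fun σ => ?_⟩, isBigO_top.2 ⟨cc.xi, fun σ => ?_⟩⟩ <;>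
    rw [Real.norm_of_nonneg cc.φnorm_pos.le, Real.norm_of_nonneg cc.diamJ_nonneg]
  · exact cc.diamJ_le_φnorm.trans_eq (one_mul _).symm
  · exact cc.φnorm_le_xi_mul_diamJ

lemma exists_pos_forall_le_abs_sub_of_ne : ∃ δ > 0, ∀ i j, i ≠ j →
    ∀ x ∈ cc.Jsub i, ∀ y ∈ cc.Jsub j, δ ≤ |x - y| := by
  refine exists_pos_forall_le_dist_of_pairwise_disjoint (fun i => ?_) cc.hJsub_disj
  obtain ⟨u, v, -, huv⟩ := cc.hJsub_interval i
  exact huv ▸ isCompact_Icc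

lemma exists_mem_Jsub_of_mem_Jc_append_cons (hx : x ∈ cc.Jc (σ ++ j :: τ)) :
    ∃ y ∈ cc.Jsub j, cc.wordMap σ y = x := by
  obtain ⟨z, hz, rfl⟩ := hx
  exact ⟨cc.wordMap (j :: τ) z, cc.wordMap_cons_mem_Jsub hz, by rw [wordMap_append]; rfl⟩

lemma φnorm_mul_le_xi_mul_abs_sub {δ : ℝ} (hδ : 0 ≤ δ)
    (hsep : ∀ i j, i ≠ j → ∀ x ∈ cc.Jsub i, ∀ y ∈ cc.Jsub j, δ ≤ |x - y|)
    (hlen : σ.length = τ.length) (hne : σ ≠ τ) (hx : x ∈ cc.Jc σ) (hy : y ∈ cc.Jc τ) :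
    cc.φnorm σ * δ ≤ cc.xi * |x - y| := by
  obtain ⟨ω, i, j, u, v, hij, rfl, rfl⟩ := exists_eq_append_cons_of_length_eq_of_ne hlen hne
  obtain ⟨x', hx', rfl⟩ := cc.exists_mem_Jsub_of_mem_Jc_append_cons hx
  obtain ⟨y', hy', rfl⟩ := cc.exists_mem_Jsub_of_mem_Jc_append_cons hy
  calc cc.φnorm (ω ++ i :: u) * δ ≤ cc.φnorm ω * |x' - y'| :=
        mul_le_mul cc.φnorm_append_le (hsep i j hij x' hx' y' hy') hδ cc.φnorm_pos.le
    _ ≤ cc.xi * |cc.wordMap ω x' - cc.wordMap ω y'| :=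
      cc.φnorm_mul_abs_sub_le (cc.hJsub_sub i hx') (cc.hJsub_sub j hy')

end BasicIntervals

section LimitSet

lemma exists_mem_Jc_of_mem_E (hx : x ∈ cc.E) (n : ℕ) :
    ∃ σ : List (Fin cc.N), σ.length = n ∧ x ∈ cc.Jc σ := by
  obtain ⟨σ, hσ⟩ := Set.mem_iUnion.1 (Set.mem_iInter₂.1 hx (n + 1) n.succ_pos)
  refine ⟨(List.ofFn σ).take n, by simp, cc.Jc_append_subset (τ := (List.ofFn σ).drop n) ?_⟩
  rwa [List.take_append_drop]

lemma E_subset_Icc : cc.E ⊆ Set.Icc 0 1 := fun _ hx =>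
  let ⟨_, _, hxσ⟩ := cc.exists_mem_Jc_of_mem_E hx 0
  cc.Jc_subset_Icc hxσ

lemma exists_prefix_φnorm_le {ε : ℝ} (hε : ε ≤ 1) (hσ : cc.φnorm σ ≤ ε) :
    ∃ τ, τ <+: σ ∧ cc.φnorm τ ≤ ε ∧ ε ≤ cc.xi * cc.B * cc.φnorm τ := by
  induction σ using List.reverseRecOn with
  | nil =>
    refine ⟨[], List.prefix_rfl, hσ, ?_⟩
    rw [φnorm_nil, mul_one]
    exact hε.trans cc.one_le_xi_mul_B
  | append_singleton σ j ih =>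
    rcases le_total (cc.φnorm σ) ε with hle | hge
    · obtain ⟨τ, hτ, hscale⟩ := ih hle
      exact ⟨τ, hτ.trans (List.prefix_append _ _), hscale⟩
    · exact ⟨σ ++ [j], List.prefix_rfl, hσ, hge.trans cc.φnorm_le_mul_φnorm_concat⟩

lemma exists_mem_Jc_φnorm_le_of_mem_E (hx : x ∈ cc.E) {ε : ℝ} (hε0 : 0 < ε) (hε : ε ≤ 1) :
    ∃ τ, x ∈ cc.Jc τ ∧ cc.φnorm τ ≤ ε ∧ ε ≤ cc.xi * cc.B * cc.φnorm τ := by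
  obtain ⟨n, hn⟩ := exists_pow_lt_of_lt_one hε0 (inv_lt_one_of_one_lt₀ cc.hb1)
  obtain ⟨σ, rfl, hxσ⟩ := cc.exists_mem_Jc_of_mem_E hx n
  obtain ⟨τ, ⟨u, rfl⟩, hτ⟩ := cc.exists_prefix_φnorm_le hε (cc.φnorm_le_inv_b_pow.trans hn.le)
  exact ⟨τ, cc.Jc_append_subset hxσ, hτ⟩

lemma exists_forall_closedBall_inter_E_subset_Jc :
    ∃ M > 0, ∀ x ∈ cc.E, ∀ ρ > 0, M * ρ ≤ 1 →
      ∃ τ, closedBall x ρ ∩ cc.E ⊆ cc.Jc τ ∧ cc.φnorm τ ≤ M * ρ := by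
  obtain ⟨δ, hδ, hsep⟩ := cc.exists_pos_forall_le_abs_sub_of_ne
  have hxi := cc.xi_pos
  have hB := one_pos.trans cc.one_lt_B
  have hM : 0 < 2 * cc.xi * (cc.xi * cc.B) / δ := by positivity
  refine ⟨_, hM, fun x hx ρ hρ hρ1 => ?_⟩
  obtain ⟨τ, hxτ, hτ_le, hle_τ⟩ :=
    cc.exists_mem_Jc_φnorm_le_of_mem_E hx (mul_pos hM hρ) hρ1
  refine ⟨τ, fun z ⟨hzρ, hzE⟩ => ?_, hτ_le⟩
  obtain ⟨τ', hlen, hzτ'⟩ := cc.exists_mem_Jc_of_mem_E hzE τ.length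
  suffices hτ : τ = τ' by rwa [hτ]
  by_contra hne
  have hnear : cc.φnorm τ * δ ≤ cc.xi * ρ :=
    (cc.φnorm_mul_le_xi_mul_abs_sub hδ.le hsep hlen.symm hne hxτ hzτ').trans
      (mul_le_mul_of_nonneg_left (mem_closedBall'.1 hzρ) hxi.le)
  have hfar : 2 * (cc.xi * ρ) ≤ cc.φnorm τ * δ := by
    refine le_of_mul_le_mul_left ?_ (mul_pos hxi hB)
    calc cc.xi * cc.B * (2 * (cc.xi * ρ)) = 2 * cc.xi * (cc.xi * cc.B) / δ * ρ * δ := by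
          field_simp
      _ ≤ cc.xi * cc.B * (cc.φnorm τ * δ) := by
        rw [← mul_assoc (cc.xi * cc.B)]
        exact mul_le_mul_of_nonneg_right hle_τ hδ.le
  linarith [mul_pos hxi hρ]

end LimitSet

/-! ### Gibbs-like measures -/

section GibbsLike

variable {cc} {μ : Measure ℝ} {h p q r t κ : ℝ} {Q : ℝ → ℝ}

lemma one_le_eta (hh : 0 ≤ h) : 1 ≤ cc.eta h := Real.one_le_rpow cc.one_le_xi (by positivity)

lemma Jc_nil : cc.Jc [] = Set.Icc 0 1 := Set.image_id _

lemma diamJ_nil : cc.diamJ [] = 1 := by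
  rw [diamJ, Jc_nil, Real.diam_Icc zero_le_one, sub_zero]

lemma IsGibbsLike.ae_mem_Icc (hμ : cc.IsGibbsLike μ h) : ∀ᵐ x ∂μ, x ∈ Set.Icc (0 : ℝ) 1 :=
  mem_of_superset (mem_ae_iff.2 hμ.2.1) cc.E_subset_Icc

lemma IsGibbsLike.memLp_id (hμ : cc.IsGibbsLike μ h) (p : ENNReal) : MemLp id p μ := by
  have := hμ.1
  refine .of_bound aestronglyMeasurable_id 1 (hμ.ae_mem_Icc.mono fun x hx => ?_)
  exact (abs_of_nonneg hx.1).trans_le hx.2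

lemma IsGibbsLike.measureReal_Jc_bounds (hμ : cc.IsGibbsLike μ h) (hh : 0 ≤ h)
    (σ : List (Fin cc.N)) :
    (cc.eta h)⁻¹ * cc.diamJ σ ^ h ≤ μ.real (cc.Jc σ) ∧
      μ.real (cc.Jc σ) ≤ cc.eta h * cc.diamJ σ ^ h := by
  rcases eq_or_ne σ [] with rfl | hσ
  · have := hμ.1
    have hone : μ.real (cc.Jc []) = 1 := by
      rw [Jc_nil, measureReal_def, mem_ae_iff_prob_eq_one measurableSet_Icc |>.1 hμ.ae_mem_Icc,
        ENNReal.toReal_one]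
    rw [hone, diamJ_nil, Real.one_rpow, mul_one, mul_one]
    exact ⟨inv_le_one_of_one_le₀ (one_le_eta hh), one_le_eta hh⟩
  · exact hμ.2.2 σ hσ

lemma IsGibbsLike.measureReal_Jc_isTheta (hμ : cc.IsGibbsLike μ h) (hh : 0 ≤ h) :
    (fun σ => μ.real (cc.Jc σ)) =Θ[⊤] fun σ => cc.φnorm σ ^ h := by
  have hη : 0 < cc.eta h := one_pos.trans_le (one_le_eta hh)
  have hdiam : (fun σ => μ.real (cc.Jc σ)) =Θ[⊤] fun σ => cc.diamJ σ ^ h := by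
    refine ⟨isBigO_top.2 ⟨cc.eta h, fun σ => ?_⟩, isBigO_top.2 ⟨cc.eta h, fun σ => ?_⟩⟩ <;>
      rw [Real.norm_of_nonneg measureReal_nonneg,
        Real.norm_of_nonneg (Real.rpow_nonneg cc.diamJ_nonneg h)]
    · exact (hμ.measureReal_Jc_bounds hh σ).2
    · exact (inv_mul_le_iff₀ hη).1 (hμ.measureReal_Jc_bounds hh σ).1
  exact hdiam.trans (cc.diamJ_isTheta_φnorm.rpow (.of_forall fun _ => cc.diamJ_nonneg)
    (.of_forall fun _ => cc.φnorm_pos.le))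

lemma IsGibbsLike.isFrostman (hμ : cc.IsGibbsLike μ h) (hh : 0 ≤ h) : IsFrostman μ h := by
  have := hμ.1
  obtain ⟨C, hC, hmass⟩ := exists_pos_eventually_le_mul_of_isBigO
    (fun σ => Real.rpow_nonneg cc.φnorm_pos.le h) (hμ.measureReal_Jc_isTheta hh).1
  obtain ⟨M, hM, hcover⟩ := cc.exists_forall_closedBall_inter_E_subset_Jc
  refine ⟨C * (M * 2) ^ h, by positivity, ?_⟩
  filter_upwards [Ioc_mem_nhdsGT (inv_pos.2 (mul_pos hM two_pos))] with ρ ⟨hρ, hρM⟩ x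
  have hE : μ.real (closedBall x ρ) = μ.real (closedBall x ρ ∩ cc.E) := by
    rw [measureReal_def, measureReal_def, measure_inter_conull hμ.2.1]
  rw [hE]
  rcases (closedBall x ρ ∩ cc.E).eq_empty_or_nonempty with hempty | ⟨y, hyρ, hyE⟩
  · rw [hempty, measureReal_empty]
    positivity
  have hρ1 : M * (2 * ρ) ≤ 1 := by
    rwa [← mul_assoc, ← le_inv_mul_iff₀ (by positivity), mul_one]
  obtain ⟨τ, hsub, hτ⟩ := hcover y hyE (2 * ρ) (by positivity) hρ1
  have hball : closedBall x ρ ⊆ closedBall y (2 * ρ) :=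
    closedBall_subset_closedBall' (by linarith [mem_closedBall'.1 hyρ])
  calc μ.real (closedBall x ρ ∩ cc.E) ≤ μ.real (cc.Jc τ) :=
        measureReal_mono ((Set.inter_subset_inter_left _ hball).trans hsub)
    _ ≤ C * cc.φnorm τ ^ h := eventually_top.1 hmass τ
    _ ≤ C * (M * (2 * ρ)) ^ h := by
      have := cc.φnorm_pos (σ := τ)
      gcongr
    _ = C * (M * 2) ^ h * ρ ^ h := by
      rw [← mul_assoc, Real.mul_rpow (by positivity) hρ.le, mul_assoc C]

lemma IsGibbsLike.isLowerRegularOn (hμ : cc.IsGibbsLike μ h) (hh : 0 ≤ h) :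
    IsLowerRegularOn μ cc.E h := by
  have := hμ.1
  obtain ⟨C, hC, hmass⟩ := exists_pos_eventually_le_mul_of_isBigO
    (fun _ => measureReal_nonneg) (hμ.measureReal_Jc_isTheta hh).2
  have hξB : 0 < cc.xi * cc.B := one_pos.trans_le cc.one_le_xi_mul_B
  refine ⟨((cc.xi * cc.B) ^ h * C)⁻¹, by positivity, ?_⟩
  filter_upwards [Ioc_mem_nhdsGT one_pos] with ρ ⟨hρ, hρ1⟩ x hx
  obtain ⟨τ, hxτ, hτ_le, hle_τ⟩ := cc.exists_mem_Jc_φnorm_le_of_mem_E hx hρ hρ1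
  have hsub : cc.Jc τ ⊆ closedBall x ρ := fun y hy =>
    (cc.dist_le_diamJ hy hxτ).trans (cc.diamJ_le_φnorm.trans hτ_le)
  rw [inv_mul_le_iff₀ (by positivity)]
  calc ρ ^ h ≤ (cc.xi * cc.B * cc.φnorm τ) ^ h := Real.rpow_le_rpow hρ.le hle_τ hh
    _ = (cc.xi * cc.B) ^ h * cc.φnorm τ ^ h := Real.mul_rpow hξB.le cc.φnorm_pos.le
    _ ≤ (cc.xi * cc.B) ^ h * (C * μ.real (cc.Jc τ)) := by
      gcongr
      exact eventually_top.1 hmass τ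
    _ ≤ (cc.xi * cc.B) ^ h * C * μ.real (closedBall x ρ) := by
      rw [← mul_assoc]
      exact mul_le_mul_of_nonneg_left (measureReal_mono hsub) (by positivity)

lemma IsGibbsLike.Vnr_isTheta (hμ : cc.IsGibbsLike μ h) (hh : 0 < h) (hr : 0 ≤ r) :
    (fun n => Vnr μ n r) =Θ[atTop] fun n : ℕ => (n : ℝ) ^ (-(r / h)) :=
  have := hμ.1
  ⟨(hμ.isLowerRegularOn hh.le).Vnr_isBigO hh hr hμ.2.1,
    (hμ.isFrostman hh.le).isBigO_Vnr hh hr (hμ.memLp_id _)⟩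

lemma strictAnti_of_hasPressure_φnorm_rpow
    (hQ : ∀ t, HasPressure (fun σ => cc.φnorm σ ^ t) (Q t)) : StrictAnti Q := by
  intro t t' htt'
  have hθ : 0 < cc.b⁻¹ ^ (t' - t) := Real.rpow_pos_of_pos (inv_pos.2 cc.b_pos) _
  have hdecay : Q t' ≤ Q t + Real.log (cc.b⁻¹ ^ (t' - t)) := by
    refine HasPressure.le_add_log hθ (fun σ => Real.rpow_pos_of_pos cc.φnorm_pos _)
      (fun σ => ?_) (hQ t) (hQ t')
    calc cc.φnorm σ ^ t' = cc.φnorm σ ^ (t' - t) * cc.φnorm σ ^ t := by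
          rw [← Real.rpow_add cc.φnorm_pos, sub_add_cancel]
      _ ≤ (cc.b⁻¹ ^ σ.length) ^ (t' - t) * cc.φnorm σ ^ t :=
        mul_le_mul_of_nonneg_right (Real.rpow_le_rpow cc.φnorm_pos.le cc.φnorm_le_inv_b_pow
          (sub_nonneg.2 htt'.le)) (Real.rpow_nonneg cc.φnorm_pos.le _)
      _ = (cc.b⁻¹ ^ (t' - t)) ^ σ.length * cc.φnorm σ ^ t := by
        rw [Real.rpow_pow_comm (inv_nonneg.2 cc.b_pos.le)]
  have hlog : Real.log (cc.b⁻¹ ^ (t' - t)) < 0 :=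
    Real.log_neg hθ (Real.rpow_lt_one (inv_nonneg.2 cc.b_pos.le)
      (inv_lt_one_of_one_lt₀ cc.hb1) (sub_pos.2 htt'))
  linarith

lemma IsGibbsLike.hasPressure_rpow_mul_rpow_iff (hμ : cc.IsGibbsLike μ h) (hh : 0 ≤ h) :
    HasPressure (fun σ => μ.real (cc.Jc σ) ^ q * cc.φnorm σ ^ t) p ↔
      HasPressure (fun σ => cc.φnorm σ ^ (h * q + t)) p := by
  refine hasPressure_congr_of_isTheta (fun σ => mul_nonneg (Real.rpow_nonneg measureReal_nonneg _)
    (Real.rpow_nonneg cc.φnorm_pos.le _)) (fun σ => Real.rpow_nonneg cc.φnorm_pos.le _) ?_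
  have hpow := (hμ.measureReal_Jc_isTheta hh).rpow (r := q) (.of_forall fun _ => measureReal_nonneg)
    (.of_forall fun _ => Real.rpow_nonneg cc.φnorm_pos.le _)
  simp only [Real.rpow_add cc.φnorm_pos, Real.rpow_mul cc.φnorm_pos.le]
  exact hpow.mul (isTheta_refl _ _)

lemma IsGibbsLike.hasPressure_rpow_mul_rpow_zero_iff (hμ : cc.IsGibbsLike μ h) (hh : 0 ≤ h)
    (hQ : ∀ t, HasPressure (fun σ => cc.φnorm σ ^ t) (Q t)) (hQh : Q h = 0) :
    HasPressure (fun σ => μ.real (cc.Jc σ) ^ q * cc.φnorm σ ^ t) 0 ↔ t = h * (1 - q) := by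
  rw [hμ.hasPressure_rpow_mul_rpow_iff hh, show t = h * (1 - q) ↔ h * q + t = h by grind,
    ← (strictAnti_of_hasPressure_φnorm_rpow hQ).injective.eq_iff, hQh]
  exact ⟨fun hp => tendsto_nhds_unique (hQ _) hp, fun hp => hp ▸ hQ _⟩

lemma IsGibbsLike.hasPressure_mul_rpow_rpow_zero_iff (hμ : cc.IsGibbsLike μ h) (hh : 0 ≤ h)
    (hQ : ∀ t, HasPressure (fun σ => cc.φnorm σ ^ t) (Q t)) (hQh : Q h = 0) (hr : 0 < r)
    (hκ : 0 < κ) :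
    HasPressure (fun σ => (μ.real (cc.Jc σ) * cc.φnorm σ ^ r) ^ (κ / (r + κ))) 0 ↔ κ = h := by
  simp only [Real.mul_rpow measureReal_nonneg (Real.rpow_nonneg cc.φnorm_pos.le _),
    ← Real.rpow_mul cc.φnorm_pos.le]
  rw [hμ.hasPressure_rpow_mul_rpow_zero_iff hh hQ hQh]
  have hrκ : r + κ ≠ 0 := by positivity
  rw [one_sub_div hrκ, add_sub_cancel_right, mul_div_assoc', mul_div_assoc', div_left_inj' hrκ,
    mul_comm h, mul_right_inj' hr.ne']

end GibbsLike

end CookieCutter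

theorem main_theorem (cc : CookieCutter) (Q : ℝ → ℝ)
    (hQ : ∀ t : ℝ, Filter.Tendsto
      (fun k : ℕ => (1 / (k : ℝ)) * Real.log
        (∑ σ : Fin k → Fin cc.N, cc.φnorm (List.ofFn σ) ^ t))
      Filter.atTop (nhds (Q t)))
    (h : ℝ) (hh0 : 0 < h) (hQh : Q h = 0)
    (μ : MeasureTheory.Measure ℝ) (hμ : cc.IsGibbsLike μ h) (r : ℝ) (hr : 0 < r)
    (P : ℝ → ℝ → ℝ)
    (hP : ∀ q t : ℝ, Filter.Tendsto
      (fun k : ℕ => (1 / (k : ℝ)) * Real.log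
        (∑ σ : Fin k → Fin cc.N,
          (μ (cc.Jc (List.ofFn σ))).toReal ^ q * cc.φnorm (List.ofFn σ) ^ t))
      Filter.atTop (nhds (P q t)))
    (β : ℝ → ℝ) (hβ : ∀ q : ℝ, P q (β q) = 0) :
    (∃! κ : ℝ, 0 < κ ∧ Filter.Tendsto
      (fun n : ℕ => (1 / (n : ℝ)) * Real.log
        (∑ σ : Fin n → Fin cc.N,
          ((μ (cc.Jc (List.ofFn σ))).toReal * cc.φnorm (List.ofFn σ) ^ r) ^ (κ / (r + κ))))
      Filter.atTop (nhds 0)) ∧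
    ∀ κ : ℝ, 0 < κ →
      (Filter.Tendsto
      (fun n : ℕ => (1 / (n : ℝ)) * Real.log
        (∑ σ : Fin n → Fin cc.N,
          ((μ (cc.Jc (List.ofFn σ))).toReal * cc.φnorm (List.ofFn σ) ^ r) ^ (κ / (r + κ))))
      Filter.atTop (nhds 0)) →
      β (κ / (r + κ)) = r * (κ / (r + κ)) ∧
      κ = β (κ / (r + κ)) / (1 - κ / (r + κ)) ∧
      Filter.Tendsto (fun n : ℕ => r * Real.log n / (-Real.log (Vnr μ n r)))
        Filter.atTop (nhds κ) ∧
      ∃ C : ℝ, 0 < C ∧ ∀ᶠ n : ℕ in Filter.atTop, C ≤ (n : ℝ) * Vnr μ n r ^ (κ / r) := by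
  have hzero := fun κ (hκ : 0 < κ) => hμ.hasPressure_mul_rpow_rpow_zero_iff hh0.le hQ hQh hr hκ
  refine ⟨⟨h, ⟨hh0, (hzero h hh0).2 rfl⟩, fun κ hκ => (hzero κ hκ.1).1 hκ.2⟩, fun κ hκ hpκ => ?_⟩
  obtain rfl : κ = h := (hzero κ hκ).1 hpκ
  have hrκ : r + κ ≠ 0 := by positivity
  have hq : 1 - κ / (r + κ) = r / (r + κ) := by rw [one_sub_div hrκ, add_sub_cancel_right]
  have hβκ : β (κ / (r + κ)) = κ * (1 - κ / (r + κ)) :=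
    (hμ.hasPressure_rpow_mul_rpow_zero_iff hκ.le hQ hQh).1 (hβ (κ / (r + κ)) ▸ hP _ _)
  have hV := hμ.Vnr_isTheta hκ hr.le
  refine ⟨?_, ?_, ?_, ?_⟩
  · rw [hβκ, hq, mul_div_left_comm]
  · rw [hβκ, hq, mul_div_cancel_right₀ _ (div_ne_zero hr.ne' hrκ)]
  · simpa only [div_div_cancel₀ hr.ne'] using
      tendsto_mul_log_div_neg_log_of_isTheta (div_ne_zero hr.ne' hκ.ne') r hV
  · simpa only [inv_div] using
      exists_pos_eventually_le_mul_rpow_of_isBigO (div_pos hr hκ) (fun _ => Vnr_nonneg) hV.2
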